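/- arXiv:2403.02282 — 2 statements merged into one kernel-verified Lean document; each statement's English description precedes it below -/
import Mathlib

section
/- A dagger category D is minimal (i.e. the canonical surjection from unitary isomorphism classes of objects to isomorphism classes of objects is a bijection) if and only if every iso-positive morphism in D is aut-positive. -/
/-!
STATEMENT 2: A dagger category `D` is minimal (i.e. the canonical surjection from unitary
isomorphism classes of objects to isomorphism classes of objects is a bijection) if and only
if every iso-positive morphism in `D` is aut-positive.
-/

open CategoryTheory

universe v u

/-- A dagger category: a contravariant involution which is the identity on objects. -/
class DaggerCategory (D : Type u) [Category.{v} D] where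
  dag : ∀ {x y : D}, (x ⟶ y) → (y ⟶ x)
  dag_dag : ∀ {x y : D} (f : x ⟶ y), dag (dag f) = f
  dag_id : ∀ (x : D), dag (𝟙 x) = 𝟙 x
  dag_comp : ∀ {x y z : D} (f : x ⟶ y) (g : y ⟶ z), dag (f ≫ g) = dag g ≫ dag f

namespace DaggerCategory

variable {D : Type u} [Category.{v} D] [DaggerCategory D]

/-- A morphism is unitary if it is invertible with inverse its dagger. -/
def IsUnitary {x y : D} (f : x ⟶ y) : Prop :=
  f ≫ dag f = 𝟙 x ∧ dag f ≫ f = 𝟙 y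

/-- `f = g† ∘ g` for some isomorphism `g : c ⟶ c'`. -/
def IsoPositive {c : D} (f : c ⟶ c) : Prop :=
  ∃ (c' : D) (g : c ⟶ c'), IsIso g ∧ f = g ≫ dag g

/-- `f = g† ∘ g` for some automorphism `g : c ⟶ c`. -/
def AutPositive {c : D} (f : c ⟶ c) : Prop :=
  ∃ g : c ⟶ c, IsIso g ∧ f = g ≫ dag g

/-- Unitary isomorphism relation on objects. -/
def UnitaryRel (x y : D) : Prop := ∃ f : x ⟶ y, IsUnitary f

/-- Isomorphism relation on objects. -/
def IsoRel (x y : D) : Prop := Nonempty (x ≅ y)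

variable (D)

/-- Unitary isomorphism classes of objects, `π₀ᵁ(D)`. -/
def pi0U := Quot (UnitaryRel (D := D))

/-- Isomorphism classes of objects, `π₀(D)`. -/
def pi0 := Quot (IsoRel (D := D))

/-- The canonical map `π₀ᵁ(D) → π₀(D)`. -/
def pi0UToPi0 : pi0U D → pi0 D :=
  Quot.map id (fun _ _ hf => hf.elim fun f hf => ⟨⟨f, dag f, hf.1, hf.2⟩⟩)

/-- A dagger category is minimal if the canonical map `π₀ᵁ(D) → π₀(D)` is a bijection. -/
def Minimal : Prop := Function.Bijective (pi0UToPi0 D)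

end DaggerCategory

open DaggerCategory

/-!
For isomorphisms `k` and `g` with a common source, `inv k ≫ g` is unitary exactly when
`k ≫ dag k = g ≫ dag g`. Hence, for an isomorphism `g : x ⟶ y`, writing `g ≫ dag g` as
`k ≫ dag k` with `k` an automorphism of `x` amounts to giving a unitary `x ⟶ y`.
-/

namespace DaggerCategory

section Unitary

variable {D : Type u} [Category.{v} D] [DaggerCategory D] {x y z : D}

instance isIso_dag (f : x ⟶ y) [IsIso f] : IsIso (dag f) :=
  ⟨dag (inv f), by rw [← dag_comp, IsIso.inv_hom_id, dag_id],
    by rw [← dag_comp, IsIso.hom_inv_id, dag_id]⟩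

theorem dag_inv (f : x ⟶ y) [IsIso f] : dag (inv f) = inv (dag f) :=
  IsIso.eq_inv_of_hom_inv_id (by rw [← dag_comp, IsIso.inv_hom_id, dag_id])

theorem IsUnitary.isIso {f : x ⟶ y} (hf : IsUnitary f) : IsIso f :=
  ⟨dag f, hf⟩

theorem isUnitary_iff_comp_dag_eq_id (f : x ⟶ y) [IsIso f] : IsUnitary f ↔ f ≫ dag f = 𝟙 x := by
  refine ⟨And.left, fun h => ⟨h, ?_⟩⟩
  rw [← IsIso.inv_eq_of_hom_inv_id h, IsIso.inv_hom_id]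

theorem isUnitary_inv_comp_iff (k : x ⟶ y) (g : x ⟶ z) [IsIso k] [IsIso g] :
    IsUnitary (inv k ≫ g) ↔ g ≫ dag g = k ≫ dag k := by
  rw [isUnitary_iff_comp_dag_eq_id, dag_comp, dag_inv, Category.assoc, IsIso.inv_comp_eq,
    Category.comp_id, ← Category.assoc, IsIso.comp_inv_eq]

theorem isUnitary_id (x : D) : IsUnitary (𝟙 x) := by
  rw [isUnitary_iff_comp_dag_eq_id, dag_id, Category.comp_id]

theorem IsUnitary.dag {f : x ⟶ y} (hf : IsUnitary f) : IsUnitary (dag f) := by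
  rw [IsUnitary, dag_dag]
  exact hf.symm

theorem IsUnitary.comp_comp_dag {u : y ⟶ z} (hu : IsUnitary u) (g : x ⟶ y) :
    (g ≫ u) ≫ DaggerCategory.dag (g ≫ u) = g ≫ DaggerCategory.dag g := by
  rw [dag_comp, Category.assoc, reassoc_of% hu.1]

theorem IsUnitary.comp {f : x ⟶ y} {g : y ⟶ z} (hf : IsUnitary f) (hg : IsUnitary g) :
    IsUnitary (f ≫ g) := by
  have := hf.isIso
  have := hg.isIso
  rw [isUnitary_iff_comp_dag_eq_id, hg.comp_comp_dag, hf.1]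

theorem autPositive_comp_dag_iff_unitaryRel (g : x ⟶ y) [IsIso g] :
    AutPositive (g ≫ dag g) ↔ UnitaryRel x y := by
  constructor
  · rintro ⟨k, _, hk⟩
    exact ⟨inv k ≫ g, (isUnitary_inv_comp_iff k g).2 hk⟩
  · rintro ⟨u, hu⟩
    have := hu.dag.isIso
    exact ⟨g ≫ dag u, inferInstance, (hu.dag.comp_comp_dag g).symm⟩

end Unitary

section IsomorphismClasses

variable (D : Type u) [Category.{v} D]

theorem isoRel_equivalence : Equivalence (IsoRel (D := D)) :=
  (isIsomorphicSetoid D).iseqv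

variable {D} in
theorem pi0_mk_eq_mk_iff {x y : D} : (Quot.mk _ x : pi0 D) = Quot.mk _ y ↔ IsoRel x y :=
  Quot.eq.trans (isoRel_equivalence D).eqvGen_iff

variable [DaggerCategory D]

theorem unitaryRel_equivalence : Equivalence (UnitaryRel (D := D)) where
  refl x := ⟨𝟙 x, isUnitary_id x⟩
  symm := fun ⟨f, hf⟩ => ⟨dag f, hf.dag⟩
  trans := fun ⟨f, hf⟩ ⟨g, hg⟩ => ⟨f ≫ g, hf.comp hg⟩

variable {D} in
theorem pi0U_mk_eq_mk_iff {x y : D} : (Quot.mk _ x : pi0U D) = Quot.mk _ y ↔ UnitaryRel x y :=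
  Quot.eq.trans (unitaryRel_equivalence D).eqvGen_iff

theorem pi0UToPi0_surjective : Function.Surjective (pi0UToPi0 D) := by
  rintro ⟨x⟩
  exact ⟨Quot.mk _ x, rfl⟩

theorem pi0UToPi0_injective_iff :
    Function.Injective (pi0UToPi0 D) ↔ ∀ x y : D, IsoRel x y → UnitaryRel x y := by
  constructor
  · intro hinj x y hxy
    exact pi0U_mk_eq_mk_iff.1 (hinj (pi0_mk_eq_mk_iff.2 hxy))
  · rintro h ⟨x⟩ ⟨y⟩ hxy
    exact pi0U_mk_eq_mk_iff.2 (h x y (pi0_mk_eq_mk_iff.1 hxy))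

theorem minimal_iff_forall_unitaryRel_of_isoRel :
    Minimal D ↔ ∀ x y : D, IsoRel x y → UnitaryRel x y :=
  (and_iff_left (pi0UToPi0_surjective D)).trans (pi0UToPi0_injective_iff D)

end IsomorphismClasses

end DaggerCategory

/-- A dagger category is minimal if and only if every iso-positive morphism is aut-positive. -/
theorem minimal_iff_isoPositive_autPositive
    (D : Type u) [Category.{v} D] [DaggerCategory D] :
    Minimal D ↔ ∀ (c : D) (f : c ⟶ c), IsoPositive f → AutPositive f := by
  rw [minimal_iff_forall_unitaryRel_of_isoRel]
  constructor
  · rintro h c _ ⟨y, g, _, rfl⟩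
    exact (autPositive_comp_dag_iff_unitaryRel g).2 (h c y ⟨asIso g⟩)
  · rintro h x y ⟨e⟩
    exact (autPositive_comp_dag_iff_unitaryRel e.hom).1 (h x _ ⟨y, e.hom, inferInstance, rfl⟩)
end

section
/- If (V,⟨·,·⟩_V) and (W,⟨·,·⟩_W) are super Hilbert spaces, then the super vector space V ⊗ W with the pairing ⟨v₁ ⊗ w₁, v₂ ⊗ w₂⟩ := (-1)^{|v₂||w₁|} ⟨v₁,v₂⟩_V ⟨w₁,w₂⟩_W (for homogeneous vectors, extended sesquilinearly) is again a super Hilbert space. -/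
open Complex TensorProduct

/-- Sesquilinearity (conjugate-linear in the first slot, linear in the second). -/
structure IsSesq {V : Type} [AddCommGroup V] [Module ℂ V] (B : V → V → ℂ) : Prop where
  add_left : ∀ v v' w, B (v + v') w = B v w + B v' w
  add_right : ∀ v w w', B v (w + w') = B v w + B v w'
  smul_left : ∀ (a : ℂ) (v w), B (a • v) w = (starRingEnd ℂ) a * B v w
  smul_right : ∀ (a : ℂ) (v w), B v (a • w) = a * B v w

/-- A finite-dimensional super Hilbert space, modelled as a complex vector space `V` with a
parity (grading) involution `σ` (`σ v = v` for even, `σ v = -v` for odd vectors) and a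
nondegenerate sesquilinear pairing `B` such that the even and odd parts are orthogonal,
`⟨v,w⟩ = (-1)^{|v||w|} conj ⟨w,v⟩` on homogeneous vectors, `⟨v,v⟩ ≥ 0` for even `v`, and
`⟨v,v⟩ / i ≥ 0` for odd `v`. -/
structure IsSuperHilbert (V : Type) [AddCommGroup V] [Module ℂ V] [FiniteDimensional ℂ V]
    (σ : V →ₗ[ℂ] V) (B : V → V → ℂ) : Prop where
  sesq : IsSesq B
  invol : ∀ v, σ (σ v) = v
  orth : ∀ v w, σ v = v → σ w = -w → B v w = 0
  orth' : ∀ v w, σ v = v → σ w = -w → B w v = 0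
  symm_even : ∀ v w, σ v = v → σ w = w → B v w = (starRingEnd ℂ) (B w v)
  symm_odd : ∀ v w, σ v = -v → σ w = -w → B v w = - (starRingEnd ℂ) (B w v)
  pos_even : ∀ v, σ v = v → 0 ≤ (B v v).re ∧ (B v v).im = 0
  pos_odd : ∀ v, σ v = -v → 0 ≤ (B v v).im ∧ (B v v).re = 0
  nondeg : ∀ v, (∀ w, B v w = 0) → v = 0

/-!
A super Hilbert space is the same thing as a Hilbert space with a self-adjoint involution `σ`: let
`D` be the square root of `σ` acting by `1` on even and by `I` on odd vectors. Then
`⟪v, w⟫ = B v (D (σ w))` is an inner product, from which the pairing is recovered as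
`B v w = ⟪v, D w⟫`. For `V ⊗ W` the inner product attached to the Koszul-signed pairing is the
usual tensor product of the two inner products, because two odd factors contribute
`-(I * I) = 1`; so positivity and nondegeneracy are those of the tensor product Hilbert space.
-/

open scoped ComplexInnerProductSpace

theorem involutive_tensorMap {R M N : Type*} [CommSemiring R] [AddCommMonoid M] [AddCommMonoid N]
    [Module R M] [Module R N] {σ : M →ₗ[R] M} {τ : N →ₗ[R] N}
    (hσ : Function.Involutive σ) (hτ : Function.Involutive τ) :
    Function.Involutive (TensorProduct.map σ τ) := fun x => by
  induction x with
  | zero => simp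
  | tmul m n => simp [hσ m, hτ n]
  | add x y hx hy => simp [hx, hy]

section Parity

variable {R V W : Type*} [CommRing R] [AddCommGroup V] [Module R V] [AddCommGroup W] [Module R W]
  {σ : V →ₗ[R] V} {τ : W →ₗ[R] W} {p q : Bool} {v : V} {w : W}

/-- `v` is homogeneous for the grading with parity involution `σ`; `p = false` means even and
`p = true` means odd. The zero vector has both parities. -/
def HasParity (σ : V →ₗ[R] V) (p : Bool) (v : V) : Prop :=
  σ v = if p then -v else v

theorem hasParity_false : HasParity σ false v ↔ σ v = v := by simp [HasParity]

theorem hasParity_true : HasParity σ true v ↔ σ v = -v := by simp [HasParity]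

theorem HasParity.zero : HasParity σ p 0 := by simp [HasParity]

theorem HasParity.neg (hv : HasParity σ p v) : HasParity σ p (-v) := by
  cases p <;> simp_all [HasParity]

theorem HasParity.tmul (hv : HasParity σ p v) (hw : HasParity τ q w) :
    HasParity (TensorProduct.map σ τ) (p ^^ q) (v ⊗ₜ[R] w) := by
  cases p <;> cases q <;> simp_all [HasParity, TensorProduct.neg_tmul, TensorProduct.tmul_neg]

theorem exists_even_add_odd [Invertible (2 : R)] (hσ : Function.Involutive σ) (v : V) :
    ∃ a c, HasParity σ false a ∧ HasParity σ true c ∧ a + c = v := by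
  refine ⟨(⅟2 : R) • (v + σ v), (⅟2 : R) • (v - σ v), ?_, ?_, ?_⟩
  · simp [HasParity, hσ v, add_comm]
  · simp [HasParity, hσ v, ← smul_neg]
  · rw [← smul_add, add_add_sub_cancel, ← two_smul R v, invOf_smul_smul]

theorem HasParity.tmul_induction [Invertible (2 : R)] (hσ : Function.Involutive σ)
    (hτ : Function.Involutive τ) {P : V ⊗[R] W → Prop}
    (tmul : ∀ p q v w, HasParity σ p v → HasParity τ q w → P (v ⊗ₜ w))
    (add : ∀ x y, P x → P y → P (x + y)) (x : V ⊗[R] W) : P x := by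
  induction x with
  | zero => simpa using tmul false false 0 0 .zero .zero
  | tmul v w =>
    obtain ⟨a, c, ha, hc, rfl⟩ := exists_even_add_odd hσ v
    obtain ⟨b, d, hb, hd, rfl⟩ := exists_even_add_odd hτ w
    simp only [TensorProduct.add_tmul, TensorProduct.tmul_add]
    exact add _ _ (add _ _ (tmul _ _ _ _ ha hb) (tmul _ _ _ _ hc hb))
      (add _ _ (tmul _ _ _ _ ha hd) (tmul _ _ _ _ hc hd))
  | add x y hx hy => exact add x y hx hy

end Parity

section ParityRoot

variable {V : Type*} [AddCommGroup V] [Module ℂ V] {σ : V →ₗ[ℂ] V} {p : Bool} {v : V}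

/-- The eigenvalue `1` or `I` of the square root of the parity involution. -/
noncomputable def parityPhase (p : Bool) : ℂ := if p then I else 1

theorem parityPhase_false : parityPhase false = 1 := by simp [parityPhase]

theorem parityPhase_true : parityPhase true = I := by simp [parityPhase]

/-- The square root of the parity involution `σ` that acts by `1` on even vectors and by `I` on
odd vectors; it translates between super Hermitian and Hermitian pairings. -/
noncomputable def parityRoot (σ : V →ₗ[ℂ] V) : V →ₗ[ℂ] V :=
  (1 / 2 : ℂ) • (LinearMap.id + σ) + (I / 2) • (LinearMap.id - σ)

theorem HasParity.parityRoot_apply (hv : HasParity σ p v) :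
    parityRoot σ v = parityPhase p • v := by
  simp only [parityRoot, LinearMap.add_apply, LinearMap.sub_apply, LinearMap.smul_apply,
    LinearMap.id_apply]
  cases p with
  | false => rw [hasParity_false.1 hv, parityPhase_false]; module
  | true => rw [hasParity_true.1 hv, parityPhase_true]; module

theorem parityRoot_parityRoot (hσ : Function.Involutive σ) (v : V) :
    parityRoot σ (parityRoot σ v) = σ v := by
  obtain ⟨a, c, ha, hc, rfl⟩ := exists_even_add_odd hσ v
  simp only [map_add, map_smul, ha.parityRoot_apply, hc.parityRoot_apply, hasParity_false.1 ha,
    hasParity_true.1 hc, parityPhase_false, parityPhase_true, one_smul, smul_smul, I_mul_I,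
    neg_smul]

theorem parityRoot_map_parityRoot (hσ : Function.Involutive σ) (v : V) :
    parityRoot σ (σ (parityRoot σ v)) = v := by
  rw [← parityRoot_parityRoot hσ (parityRoot σ v), parityRoot_parityRoot hσ,
    parityRoot_parityRoot hσ, hσ]

end ParityRoot

section SuperPairing

variable {V : Type*} [NormedAddCommGroup V] [InnerProductSpace ℂ V] {σ : V →ₗ[ℂ] V} {p q : Bool}
  {v w : V}

theorem HasParity.inner_eq_zero (hσ : σ.IsSymmetric) (hv : HasParity σ p v) (hw : HasParity σ q w)
    (hpq : p ≠ q) : ⟪v, w⟫ = 0 := by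
  have hvw : ⟪σ v, w⟫ = ⟪v, σ w⟫ := hσ v w
  cases p <;> cases q <;> simp only [HasParity, Bool.false_eq_true, if_true, if_false] at hv hw
  · exact absurd rfl hpq
  · rwa [hv, hw, inner_neg_right, self_eq_neg] at hvw
  · rwa [hv, hw, inner_neg_left, neg_eq_self] at hvw
  · exact absurd rfl hpq

/-- The super Hermitian pairing attached to an inner product and a parity involution. -/
noncomputable def superPairing (σ : V →ₗ[ℂ] V) (v w : V) : ℂ := ⟪v, parityRoot σ w⟫

theorem HasParity.superPairing_eq (hw : HasParity σ q w) :
    superPairing σ v w = parityPhase q * ⟪v, w⟫ := by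
  rw [superPairing, hw.parityRoot_apply, inner_smul_right]

theorem HasParity.superPairing_eq_zero (hσ : σ.IsSymmetric) (hv : HasParity σ p v)
    (hw : HasParity σ q w) (hpq : p ≠ q) : superPairing σ v w = 0 := by
  rw [hw.superPairing_eq, hv.inner_eq_zero hσ hw hpq, mul_zero]

theorem HasParity.superPairing_self (hv : HasParity σ p v) :
    superPairing σ v v = parityPhase p * (‖v‖ ^ 2 : ℝ) := by
  rw [hv.superPairing_eq, inner_self_eq_norm_sq_to_K]
  norm_cast

theorem superPairing_parityRoot_map (hσ : Function.Involutive σ) (v w : V) :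
    superPairing σ v (parityRoot σ (σ w)) = ⟪v, w⟫ := by
  rw [superPairing, parityRoot_parityRoot hσ, hσ]

theorem isSymmetric_tensorMap {𝕜 E F : Type*} [RCLike 𝕜] [NormedAddCommGroup E]
    [InnerProductSpace 𝕜 E] [NormedAddCommGroup F] [InnerProductSpace 𝕜 F]
    {S : E →ₗ[𝕜] E} {T : F →ₗ[𝕜] F} (hS : S.IsSymmetric) (hT : T.IsSymmetric) :
    (TensorProduct.map S T).IsSymmetric := fun x y => by
  induction x with
  | zero => simp
  | add x x' hx hx' => rw [map_add, inner_add_left, inner_add_left, hx, hx']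
  | tmul v w =>
    induction y with
    | zero => simp
    | add y y' hy hy' => rw [inner_add_right, map_add, inner_add_right, hy, hy']
    | tmul v' w' => simp [hS v v', hT w w']

end SuperPairing

section InnerProductToSuperHilbert

variable {V : Type} [NormedAddCommGroup V] [InnerProductSpace ℂ V] {σ : V →ₗ[ℂ] V}

theorem isSesq_superPairing (σ : V →ₗ[ℂ] V) : IsSesq (superPairing σ) where
  add_left _ _ _ := inner_add_left _ _ _
  add_right _ _ _ := by simp only [superPairing, map_add, inner_add_right]
  smul_left _ _ _ := inner_smul_left _ _ _
  smul_right _ _ _ := by simp only [superPairing, map_smul, inner_smul_right]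

theorem isSuperHilbert_superPairing [FiniteDimensional ℂ V] (hσ : σ.IsSymmetric)
    (hinv : Function.Involutive σ) : IsSuperHilbert V σ (superPairing σ) where
  sesq := isSesq_superPairing σ
  invol := hinv
  orth _ _ hv hw :=
    (hasParity_false.2 hv).superPairing_eq_zero hσ (hasParity_true.2 hw) Bool.false_ne_true
  orth' _ _ hv hw :=
    (hasParity_true.2 hw).superPairing_eq_zero hσ (hasParity_false.2 hv) Bool.false_ne_true.symm
  symm_even v w hv hw := by
    rw [(hasParity_false.2 hv).superPairing_eq, (hasParity_false.2 hw).superPairing_eq]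
    simp [parityPhase]
  symm_odd v w hv hw := by
    rw [(hasParity_true.2 hv).superPairing_eq, (hasParity_true.2 hw).superPairing_eq]
    simp [parityPhase]
  pos_even v hv := by
    rw [(hasParity_false.2 hv).superPairing_self]
    simp [parityPhase, -ofReal_pow]
  pos_odd v hv := by
    rw [(hasParity_true.2 hv).superPairing_self]
    simp [parityPhase, -ofReal_pow]
  nondeg v hv := by
    rw [← inner_self_eq_zero (𝕜 := ℂ), ← superPairing_parityRoot_map hinv]
    exact hv _

end InnerProductToSuperHilbert

section Sesquilinear

variable {V W : Type} [AddCommGroup V] [Module ℂ V] [AddCommGroup W] [Module ℂ W]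
  {σ : V →ₗ[ℂ] V} {τ : W →ₗ[ℂ] W}

theorem IsSesq.neg_left {B : V → V → ℂ} (hB : IsSesq B) (v w : V) : B (-v) w = -B v w := by
  simpa using hB.smul_left (-1) v w

theorem IsSesq.neg_right {B : V → V → ℂ} (hB : IsSesq B) (v w : V) : B v (-w) = -B v w := by
  simpa using hB.smul_right (-1) v w

theorem IsSesq.eq_of_eq_on_hasParity_tmul {B B' : V ⊗[ℂ] W → V ⊗[ℂ] W → ℂ}
    (hB : IsSesq B) (hB' : IsSesq B') (hσ : Function.Involutive σ) (hτ : Function.Involutive τ)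
    (heq : ∀ p₁ p₂ q₁ q₂ v₁ v₂ w₁ w₂, HasParity σ p₁ v₁ → HasParity σ p₂ v₂ → HasParity τ q₁ w₁ →
      HasParity τ q₂ w₂ → B (v₁ ⊗ₜ w₁) (v₂ ⊗ₜ w₂) = B' (v₁ ⊗ₜ w₁) (v₂ ⊗ₜ w₂)) : B = B' := by
  funext x y
  induction x using HasParity.tmul_induction hσ hτ with
  | add x x' hx hx' => rw [hB.add_left, hB'.add_left, hx, hx']
  | tmul p₁ q₁ v₁ w₁ hv₁ hw₁ =>
    induction y using HasParity.tmul_induction hσ hτ with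
    | add y y' hy hy' => rw [hB.add_right, hB'.add_right, hy, hy']
    | tmul p₂ q₂ v₂ w₂ hv₂ hw₂ => exact heq _ _ _ _ _ _ _ _ hv₁ hv₂ hw₁ hw₂

end Sesquilinear

section SuperHilbertToInnerProduct

variable {V : Type} [AddCommGroup V] [Module ℂ V] {σ : V →ₗ[ℂ] V} {B : V → V → ℂ}

namespace IsSuperHilbert

variable [FiniteDimensional ℂ V]

theorem apply_parityRoot_map_add (h : IsSuperHilbert V σ B) {a c a' c' : V}
    (ha : HasParity σ false a) (hc : HasParity σ true c)
    (ha' : HasParity σ false a') (hc' : HasParity σ true c') :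
    B (a + c) (parityRoot σ (σ (a' + c'))) = B a a' - I * B c c' := by
  have hac' : B a c' = 0 := h.orth a c' (hasParity_false.1 ha) (hasParity_true.1 hc')
  have hca' : B c a' = 0 := h.orth' a' c (hasParity_false.1 ha') (hasParity_true.1 hc)
  rw [map_add, hasParity_false.1 ha', hasParity_true.1 hc', map_add, ha'.parityRoot_apply,
    hc'.neg.parityRoot_apply]
  simp only [parityPhase_false, parityPhase_true, h.sesq.add_left, h.sesq.add_right,
    h.sesq.smul_right, h.sesq.neg_right, hac', hca']
  ring

/-- The positive semidefinite Hermitian form `⟪v, w⟫ = B v (D (σ w))`, where `D = parityRoot σ`: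
it is `B` on even vectors and `-I * B` on odd vectors. -/
noncomputable abbrev preInnerCore (h : IsSuperHilbert V σ B) : PreInnerProductSpace.Core ℂ V where
  inner v w := B v (parityRoot σ (σ w))
  conj_inner_symm v w := by
    obtain ⟨a, c, ha, hc, rfl⟩ := exists_even_add_odd h.invol v
    obtain ⟨a', c', ha', hc', rfl⟩ := exists_even_add_odd h.invol w
    rw [h.apply_parityRoot_map_add ha' hc' ha hc, h.apply_parityRoot_map_add ha hc ha' hc',
      h.symm_even a a' (hasParity_false.1 ha) (hasParity_false.1 ha'),
      h.symm_odd c c' (hasParity_true.1 hc) (hasParity_true.1 hc')]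
    simp
  re_inner_nonneg v := by
    obtain ⟨a, c, ha, hc, rfl⟩ := exists_even_add_odd h.invol v
    rw [h.apply_parityRoot_map_add ha hc ha hc]
    simpa using add_nonneg (h.pos_even a (hasParity_false.1 ha)).1
      (h.pos_odd c (hasParity_true.1 hc)).1
  add_left _ _ _ := h.sesq.add_left _ _ _
  smul_left _ _ _ := h.sesq.smul_left _ _ _

/-- The inner product attached to a super Hilbert space; definiteness is the nondegeneracy of the
pairing, by Cauchy–Schwarz. -/
noncomputable abbrev innerCore (h : IsSuperHilbert V σ B) : InnerProductSpace.Core ℂ V where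
  toCore := h.preInnerCore
  definite v hv := h.nondeg v fun w => by
    let := InnerProductSpace.Core.toSeminormedAddCommGroup (c := h.preInnerCore)
    let := InnerProductSpace.ofCore h.preInnerCore
    have hnorm : ‖v‖ = 0 := by
      rw [norm_eq_sqrt_re_inner (𝕜 := ℂ), hv, map_zero, Real.sqrt_zero]
    have hvw : B v (parityRoot σ (σ (parityRoot σ w))) = 0 :=
      inner_eq_zero_of_left (𝕜 := ℂ) (parityRoot σ w) hnorm
    rwa [parityRoot_map_parityRoot h.invol] at hvw

/-- The norm of the inner product attached to a super Hilbert space; it extends the given additive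
group structure. -/
noncomputable abbrev normedAddCommGroup (h : IsSuperHilbert V σ B) : NormedAddCommGroup V :=
  h.innerCore.toNormedAddCommGroup

/-- The Hilbert space structure attached to a super Hilbert space. -/
noncomputable abbrev innerProductSpace (h : IsSuperHilbert V σ B) :
    letI := h.normedAddCommGroup
    InnerProductSpace ℂ V :=
  .ofCore h.innerCore.toCore

theorem isSymmetric (h : IsSuperHilbert V σ B) :
    letI := h.normedAddCommGroup
    letI := h.innerProductSpace
    σ.IsSymmetric := fun v w => by
  change B (σ v) (parityRoot σ (σ w)) = B v (parityRoot σ (σ (σ w)))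
  obtain ⟨a, c, ha, hc, rfl⟩ := exists_even_add_odd h.invol v
  obtain ⟨a', c', ha', hc', rfl⟩ := exists_even_add_odd h.invol w
  have hv : σ (a + c) = a + -c := by rw [map_add, hasParity_false.1 ha, hasParity_true.1 hc]
  have hw : σ (a' + c') = a' + -c' := by
    rw [map_add, hasParity_false.1 ha', hasParity_true.1 hc']
  rw [hv, h.apply_parityRoot_map_add ha hc.neg ha' hc', hw,
    h.apply_parityRoot_map_add ha hc ha' hc'.neg, h.sesq.neg_left, h.sesq.neg_right]

theorem eq_superPairing (h : IsSuperHilbert V σ B) :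
    letI := h.normedAddCommGroup
    letI := h.innerProductSpace
    B = superPairing σ := by
  funext v w
  change B v w = B v (parityRoot σ (σ (parityRoot σ w)))
  rw [parityRoot_map_parityRoot h.invol]

end IsSuperHilbert

end SuperHilbertToInnerProduct

section Tensor

variable {V W : Type*} [NormedAddCommGroup V] [InnerProductSpace ℂ V] [NormedAddCommGroup W]
  [InnerProductSpace ℂ W] {σ : V →ₗ[ℂ] V} {τ : W →ₗ[ℂ] W}

theorem HasParity.superPairing_tmul {p₂ q₁ q₂ : Bool} {v₁ v₂ : V} {w₁ w₂ : W}
    (hτ : τ.IsSymmetric) (hv₂ : HasParity σ p₂ v₂) (hw₁ : HasParity τ q₁ w₁)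
    (hw₂ : HasParity τ q₂ w₂) :
    superPairing (TensorProduct.map σ τ) (v₁ ⊗ₜ w₁) (v₂ ⊗ₜ w₂) =
      (if q₁ && p₂ then -1 else 1) * superPairing σ v₁ v₂ * superPairing τ w₁ w₂ := by
  rw [(hv₂.tmul hw₂).superPairing_eq, hv₂.superPairing_eq, hw₂.superPairing_eq,
    TensorProduct.inner_tmul]
  rcases eq_or_ne q₁ q₂ with rfl | hq
  · have hphase : parityPhase (p₂ ^^ q₁) =
        (if q₁ && p₂ then -1 else 1) * parityPhase p₂ * parityPhase q₁ := by
      cases p₂ <;> cases q₁ <;> simp [parityPhase]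
    rw [hphase]
    ring
  · rw [hw₁.inner_eq_zero hτ hw₂ hq]
    ring

end Tensor

/-!
STATEMENT 17: If `(V,⟨·,·⟩_V)` and `(W,⟨·,·⟩_W)` are super Hilbert spaces, then the super
vector space `V ⊗ W` (with the total grading `σ_V ⊗ σ_W`) with the pairing
`⟨v₁ ⊗ w₁, v₂ ⊗ w₂⟩ := (-1)^{|v₂||w₁|} ⟨v₁,v₂⟩_V ⟨w₁,w₂⟩_W` (for homogeneous vectors,
extended sesquilinearly) is again a super Hilbert space.
-/
theorem tensor_of_superHilbert
    (V W : Type) [AddCommGroup V] [Module ℂ V] [FiniteDimensional ℂ V]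
    [AddCommGroup W] [Module ℂ W] [FiniteDimensional ℂ W]
    (σV : V →ₗ[ℂ] V) (BV : V → V → ℂ) (σW : W →ₗ[ℂ] W) (BW : W → W → ℂ)
    (hV : IsSuperHilbert V σV BV) (hW : IsSuperHilbert W σW BW)
    (BT : TensorProduct ℂ V W → TensorProduct ℂ V W → ℂ)
    (hsesq : IsSesq BT)
    -- `BT` is given on pure tensors by the Koszul-signed product of the pairings
    (hform : ∀ (v₁ v₂ : V) (w₁ w₂ : W) (bo co : Bool),
      σW w₁ = (if bo then -w₁ else w₁) → σV v₂ = (if co then -v₂ else v₂) →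
      BT (v₁ ⊗ₜ[ℂ] w₁) (v₂ ⊗ₜ[ℂ] w₂)
        = (if bo && co then -1 else 1) * BV v₁ v₂ * BW w₁ w₂) :
    IsSuperHilbert (TensorProduct ℂ V W) (TensorProduct.map σV σW) BT := by
  let := hV.normedAddCommGroup
  let := hV.innerProductSpace
  let := hW.normedAddCommGroup
  let := hW.innerProductSpace
  have hBT : BT = superPairing (TensorProduct.map σV σW) :=
    hsesq.eq_of_eq_on_hasParity_tmul (isSesq_superPairing _) hV.invol hW.invol
      fun p₁ p₂ q₁ q₂ v₁ v₂ w₁ w₂ _ hv₂ hw₁ hw₂ => by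
        rw [hform v₁ v₂ w₁ w₂ q₁ p₂ hw₁ hv₂, hv₂.superPairing_tmul hW.isSymmetric hw₁ hw₂,
          ← hV.eq_superPairing, ← hW.eq_superPairing]
  rw [hBT]
  exact isSuperHilbert_superPairing (isSymmetric_tensorMap hV.isSymmetric hW.isSymmetric)
    (involutive_tensorMap hV.invol hW.invol)
end
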